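/- (Gluing across a hyperplane preserves weak k-th order data.) Let u ∈ C^∞ up to the boundary on the upper halfspace H⁺ and U ∈ C^∞ up to the boundary on the lower halfspace H⁻, both with A u ∈ L¹(H⁺) and A U ∈ L¹(H⁻), and suppose the traces of D^j u and D^j U on H = ∂H⁺ coincide for j = 0, 1, …, k−1. Define Eu = u on H⁺ and Eu = U on H⁻. Then for every test function φ ∈ C_c^∞(ℝⁿ, W), ∫_{ℝⁿ} Eu · A*φ dx = ∫_{H⁺} A u · φ dx + ∫_{H⁻} A U · φ dx, where A* = (−1)^k Σ_{|α|=k} A_α* ∂^α. In particular A(Eu) ∈ L¹(ℝⁿ, W) in the sense of distributions, equal to A u on H⁺ and A U on H⁻, with no singular part on H. -/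

import Mathlib

open MeasureTheory Finset RealInnerProductSpace

lemma half_zero (m : ℕ) (w : (Fin (m + 1) → ℝ) → ℝ) (hw : ContDiff ℝ 1 w)
    (hc : HasCompactSupport w) (h0 : ∀ x : Fin (m + 1) → ℝ, x (Fin.last m) = 0 → w x = 0)
    (i : Fin (m + 1)) :
    ∫ x in {x : Fin (m + 1) → ℝ | 0 ≤ x (Fin.last m)}, fderiv ℝ w x (Pi.single i 1) = 0 := by
  obtain ⟨R, hR0, hR⟩ : ∃ R : ℝ, 0 < R ∧ tsupport w ⊆ Metric.ball 0 R := by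
    obtain ⟨R, hR⟩ := hc.isCompact.isBounded.subset_ball 0
    exact ⟨max R 1, by positivity, hR.trans (Metric.ball_subset_ball (le_max_left _ _))⟩
  have hout : ∀ x : Fin (m + 1) → ℝ, ∀ j, R ≤ |x j| → x ∉ tsupport w := by
    intro x j hj hx
    have := hR hx
    rw [mem_ball_zero_iff] at this
    have h2 := norm_le_pi_norm x j
    rw [Real.norm_eq_abs] at h2
    linarith
  have hcont : Continuous fun x => fderiv ℝ w x (Pi.single i 1) :=
    (hw.continuous_fderiv (by norm_num)).clm_apply continuous_const
  set a : Fin (m + 1) → ℝ := fun j => if j = Fin.last m then 0 else -R with ha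
  set b : Fin (m + 1) → ℝ := fun _ => R with hb
  have hab : a ≤ b := by
    intro j; simp only [ha, hb]; split_ifs <;> linarith
  have hsub : Set.Icc a b ⊆ {x : Fin (m + 1) → ℝ | 0 ≤ x (Fin.last m)} := by
    intro x hx
    have := hx.1 (Fin.last m)
    simpa [ha] using this
  have hms : MeasurableSet {x : Fin (m + 1) → ℝ | 0 ≤ x (Fin.last m)} :=
    measurableSet_le measurable_const (measurable_pi_apply _)
  rw [setIntegral_eq_of_subset_of_forall_sdiff_eq_zero hms hsub]
  · have key := integral_divergence_of_hasFDerivAt_off_countable' a b hab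
      (fun j x => if j = i then w x else 0) (fun j x => if j = i then fderiv ℝ w x else 0) ∅
      Set.countable_empty ?_ ?_ ?_
    · have e1 : ∀ x : Fin (m + 1) → ℝ, (∑ j, (if j = i then fderiv ℝ w x else 0) (Pi.single j 1))
          = fderiv ℝ w x (Pi.single i 1) := by
        intro x
        rw [Finset.sum_eq_single i]
        · simp
        · intro j _ hj; simp [hj]
        · simp
      simp only [e1] at key
      rw [key]
      apply Finset.sum_eq_zero
      intro j _
      by_cases hj : j = i
      · subst hj
        have f1 : ∀ y : Fin m → ℝ, w (j.insertNth (b j) y) = 0 := fun y =>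
          image_eq_zero_of_notMem_tsupport (hout _ j (by simp [hb, le_abs_self]))
        have f2 : ∀ y : Fin m → ℝ, w (j.insertNth (a j) y) = 0 := by
          intro y
          by_cases hl : j = Fin.last m
          · apply h0
            rw [← hl]
            simp [ha, hl]
          · exact image_eq_zero_of_notMem_tsupport (hout _ j (by simp [ha, hl, le_abs_self]))
        simp [f1, f2]
      · simp [hj]
    · intro j
      by_cases hj : j = i
      · simpa [hj] using hw.continuous.continuousOn
      · simpa [hj] using continuousOn_const
    · intro x _ j
      by_cases hj : j = i
      · simpa [hj] using ((hw.differentiable (by norm_num)) x).hasFDerivAt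
      · simpa [hj] using hasFDerivAt_const (0 : ℝ) x
    · apply ContinuousOn.integrableOn_compact isCompact_Icc
      apply Continuous.continuousOn
      apply continuous_finsetSum
      intro j _
      by_cases hj : j = i
      · subst hj; simpa using hcont
      · simpa [hj] using continuous_const
  · intro x hx
    have hx1 : x ∉ tsupport w := by
      have hx2 := hx.2
      have hx0 : 0 ≤ x (Fin.last m) := hx.1
      by_contra hmem
      apply hx2
      have hlt : ∀ j, |x j| < R := fun j => by
        by_contra hh
        exact hout x j (not_lt.1 hh) hmem
      constructor
      · intro j
        by_cases hl : j = Fin.last m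
        · simp [ha, hl, hx0]
        · simpa [ha, hl] using (abs_lt.1 (hlt j)).1.le
      · intro j
        exact (abs_lt.1 (hlt j)).2.le
    rw [fderiv_of_notMem_tsupport ℝ hx1]; simp

lemma full_zero (m : ℕ) (w : (Fin (m + 1) → ℝ) → ℝ) (hw : ContDiff ℝ 1 w)
    (hc : HasCompactSupport w) (v : Fin (m + 1) → ℝ) :
    ∫ x, fderiv ℝ w x v = 0 := by
  have hcont : Continuous fun x => fderiv ℝ w x v :=
    (hw.continuous_fderiv (by norm_num)).clm_apply continuous_const
  have h := integral_bilinear_fderiv_right_eq_neg_left_of_integrable (μ := volume)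
    (f := fun _ : Fin (m + 1) → ℝ => (1 : ℝ)) (g := w) (v := v) (B := ContinuousLinearMap.mul ℝ ℝ)
    (by simp) 
    (by simpa using hcont.integrable_of_hasCompactSupport (hc.fderiv_apply ℝ v)) 
    (by simpa using hw.continuous.integrable_of_hasCompactSupport hc)
    (fun x _ => by fun_prop) (fun x _ => hw.differentiable (by norm_num) x)
  simpa using h

lemma glue_zero (m : ℕ) (h H : (Fin (m + 1) → ℝ) → ℝ) (hh : ContDiff ℝ 1 h) (hH : ContDiff ℝ 1 H)
    (hc : HasCompactSupport h) (Hc : HasCompactSupport H)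
    (h0 : ∀ x : Fin (m + 1) → ℝ, x (Fin.last m) = 0 → h x = H x)
    (i : Fin (m + 1)) :
    (∫ x in {x : Fin (m + 1) → ℝ | 0 ≤ x (Fin.last m)}, fderiv ℝ h x (Pi.single i 1))
     + (∫ x in {x : Fin (m + 1) → ℝ | 0 ≤ x (Fin.last m)}ᶜ, fderiv ℝ H x (Pi.single i 1)) = 0 := by
  have hms : MeasurableSet {x : Fin (m + 1) → ℝ | 0 ≤ x (Fin.last m)} :=
    measurableSet_le measurable_const (measurable_pi_apply _)
  have hi : Integrable fun x => fderiv ℝ h x (Pi.single i 1) :=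
    ((hh.continuous_fderiv (by norm_num)).clm_apply
      continuous_const).integrable_of_hasCompactSupport (hc.fderiv_apply ℝ _)
  have Hi : Integrable fun x => fderiv ℝ H x (Pi.single i 1) :=
    ((hH.continuous_fderiv (by norm_num)).clm_apply
      continuous_const).integrable_of_hasCompactSupport (Hc.fderiv_apply ℝ _)
  have k1 := half_zero m (h - H) (hh.sub hH) (hc.sub Hc)
    (fun x hx => by simp [h0 x hx]) i
  have k2 := full_zero m H hH Hc (Pi.single i 1)
  rw [← integral_add_compl hms Hi] at k2
  have e : ∀ x, fderiv ℝ (h - H) x (Pi.single i 1)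
      = fderiv ℝ h x (Pi.single i 1) - fderiv ℝ H x (Pi.single i 1) := fun x => by
    rw [fderiv_sub (hh.differentiable (by norm_num) x) (hH.differentiable (by norm_num) x)]; simp
  simp only [e] at k1
  rw [integral_sub hi.integrableOn Hi.integrableOn] at k1
  linarith

lemma glue_parts (m : ℕ) {V : Type*} [NormedAddCommGroup V] [InnerProductSpace ℝ V]
    (f F g : (Fin (m + 1) → ℝ) → V)
    (hf : ContDiff ℝ 1 f) (hF : ContDiff ℝ 1 F) (hg : ContDiff ℝ 1 g) (hc : HasCompactSupport g)
    (h0 : ∀ x : Fin (m + 1) → ℝ, x (Fin.last m) = 0 → f x = F x) (i : Fin (m + 1)) :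
    (∫ x in {x : Fin (m + 1) → ℝ | 0 ≤ x (Fin.last m)}, ⟪fderiv ℝ f x (Pi.single i 1), g x⟫)
     + (∫ x in {x : Fin (m + 1) → ℝ | 0 ≤ x (Fin.last m)}ᶜ, ⟪fderiv ℝ F x (Pi.single i 1), g x⟫)
    = - ((∫ x in {x : Fin (m + 1) → ℝ | 0 ≤ x (Fin.last m)}, ⟪f x, fderiv ℝ g x (Pi.single i 1)⟫)
     + (∫ x in {x : Fin (m + 1) → ℝ | 0 ≤ x (Fin.last m)}ᶜ,
        ⟪F x, fderiv ℝ g x (Pi.single i 1)⟫)) := by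
  have cs : ∀ p : (Fin (m + 1) → ℝ) → V, HasCompactSupport fun x => ⟪p x, g x⟫ := fun p =>
    hc.mono (fun x hx => by
      contrapose! hx
      simp only [Function.mem_support, not_not] at hx ⊢
      simp [hx])
  have hgc : Continuous fun x => fderiv ℝ g x (Pi.single i 1) :=
    (hg.continuous_fderiv (by norm_num)).clm_apply continuous_const
  have cs' : ∀ p : (Fin (m + 1) → ℝ) → V,
      HasCompactSupport fun x => ⟪p x, fderiv ℝ g x (Pi.single i 1)⟫ := fun p =>
    (hc.fderiv_apply ℝ (Pi.single i 1)).mono (fun x hx => by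
      contrapose! hx
      simp only [Function.mem_support, not_not] at hx ⊢
      simp [hx])
  have ifd : ∀ p : (Fin (m + 1) → ℝ) → V, ContDiff ℝ 1 p →
      Integrable fun x => ⟪fderiv ℝ p x (Pi.single i 1), g x⟫ := fun p hp =>
    (((hp.continuous_fderiv (by norm_num)).clm_apply continuous_const).inner
      hg.continuous).integrable_of_hasCompactSupport (cs _)
  have igd : ∀ p : (Fin (m + 1) → ℝ) → V, ContDiff ℝ 1 p →
      Integrable fun x => ⟪p x, fderiv ℝ g x (Pi.single i 1)⟫ := fun p hp =>
    (hp.continuous.inner hgc).integrable_of_hasCompactSupport (cs' _)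
  have e : ∀ p : (Fin (m + 1) → ℝ) → V, ContDiff ℝ 1 p → ∀ x,
      fderiv ℝ (fun x => ⟪p x, g x⟫) x (Pi.single i 1)
      = ⟪p x, fderiv ℝ g x (Pi.single i 1)⟫ + ⟪fderiv ℝ p x (Pi.single i 1), g x⟫ :=
    fun p hp x => fderiv_inner_apply ℝ (hp.differentiable (by norm_num) x)
      (hg.differentiable (by norm_num) x) _
  have key := glue_zero m (fun x => ⟪f x, g x⟫) (fun x => ⟪F x, g x⟫) (hf.inner ℝ hg)
    (hF.inner ℝ hg) (cs f) (cs F) (fun x hx => by simp [h0 x hx]) i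
  simp only [e f hf, e F hF] at key
  rw [integral_add (igd f hf).integrableOn (ifd f hf).integrableOn,
    integral_add (igd F hF).integrableOn (ifd F hF).integrableOn] at key
  linarith

lemma iter_succ_right {X V : Type*} [NormedAddCommGroup X] [NormedSpace ℝ X]
    [NormedAddCommGroup V]
    [NormedSpace ℝ V] (g : X → V) (hg : ContDiff ℝ (⊤ : ℕ∞) g) (k : ℕ) (v : Fin (k + 1) → X)
    (x : X) : iteratedFDeriv ℝ (k + 1) g x v
      = iteratedFDeriv ℝ k (fun y => fderiv ℝ g y (v (Fin.last k))) x (Fin.init v) := by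
  rw [iteratedFDeriv_succ_apply_right]
  have := ((ContinuousLinearMap.apply ℝ V (v (Fin.last k))).iteratedFDeriv_comp_left
    (f := fderiv ℝ g) (x := x)
    (n := k) (i := k) ((hg.fderiv_right (m := k) (by norm_cast; exact le_top)).contDiffAt) le_rfl)
  have h2 := congrArg (fun M => M (Fin.init v)) this
  exact h2.symm

lemma iter_succ {X V : Type*} [NormedAddCommGroup X] [NormedSpace ℝ X] [NormedAddCommGroup V]
    [NormedSpace ℝ V] (k : ℕ) : ∀ (g : X → V) (_ : ContDiff ℝ (⊤ : ℕ∞) g) (v : Fin (k + 1) → X)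
    (x : X), iteratedFDeriv ℝ (k + 1) g x v
      = iteratedFDeriv ℝ k (fun y => fderiv ℝ g y (v 0)) x (Fin.tail v) := by
  induction k with
  | zero =>
    intro g hg v x
    simp
  | succ k ih =>
    intro g hg v x
    have sm : ∀ w : X, ContDiff ℝ (⊤ : ℕ∞) fun x => fderiv ℝ g x w := fun w =>
      (hg.fderiv_right (m := (⊤ : ℕ∞)) (by simp)).clm_apply contDiff_const
    rw [iter_succ_right g hg, ih _ (sm _), iter_succ_right _ (sm _)]
    have hd : ∀ y, DifferentiableAt ℝ (fderiv ℝ g) y := fun y =>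
      (hg.fderiv_right (m := 1) (by norm_cast)).differentiable (by norm_num) y
    have e : ∀ (a b : X) y, fderiv ℝ (fun z => fderiv ℝ g z a) y b
        = fderiv ℝ (fderiv ℝ g) y b a := fun a b y => by
      rw [fderiv_clm_apply (hd y) (differentiableAt_const _)]
      simp
    simp only [e]
    have s : ∀ (a b : X) y, fderiv ℝ (fderiv ℝ g) y b a = fderiv ℝ (fderiv ℝ g) y a b :=
      fun a b y => ((hg.contDiffAt (x := y)).isSymmSndFDerivAt (by
        simp only [minSmoothness_of_isRCLikeNormedField]; norm_cast)).eq b a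
    have h1 : (Fin.init v) 0 = v 0 := rfl
    have h2 : (Fin.tail v) (Fin.last k) = v (Fin.last (k + 1)) := rfl
    rw [h1, h2, Fin.tail_init_eq_init_tail]
    simp only [s (v (Fin.last (k + 1))) (v 0)]

lemma iter_glue (m : ℕ) {V : Type*} [NormedAddCommGroup V] [InnerProductSpace ℝ V]
    (f F : (Fin (m + 1) → ℝ) → V)
    (hf : ContDiff ℝ (⊤ : ℕ∞) f) (hF : ContDiff ℝ (⊤ : ℕ∞) F) (k : ℕ) :
    ∀ (g : (Fin (m + 1) → ℝ) → V)
    (_ : ContDiff ℝ (⊤ : ℕ∞) g) (_ : HasCompactSupport g)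
    (_ : ∀ j < k, ∀ x : Fin (m + 1) → ℝ, x (Fin.last m) = 0 →
      iteratedFDeriv ℝ j f x = iteratedFDeriv ℝ j F x) (d : Fin k → Fin (m + 1)),
    (∫ x in {x : Fin (m + 1) → ℝ | 0 ≤ x (Fin.last m)},
        ⟪iteratedFDeriv ℝ k f x fun l => Pi.single (d l) (1 : ℝ), g x⟫)
     + (∫ x in {x : Fin (m + 1) → ℝ | 0 ≤ x (Fin.last m)}ᶜ,
        ⟪iteratedFDeriv ℝ k F x fun l => Pi.single (d l) (1 : ℝ), g x⟫)
    = (-1) ^ k * ((∫ x in {x : Fin (m + 1) → ℝ | 0 ≤ x (Fin.last m)},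
        ⟪f x, iteratedFDeriv ℝ k g x fun l => Pi.single (d l) (1 : ℝ)⟫)
     + (∫ x in {x : Fin (m + 1) → ℝ | 0 ≤ x (Fin.last m)}ᶜ,
        ⟪F x, iteratedFDeriv ℝ k g x fun l => Pi.single (d l) (1 : ℝ)⟫)) := by
  induction k with
  | zero => intro g _ _ _ d; simp
  | succ k ih =>
    intro g hg hc htr d
    have sm : ∀ p : (Fin (m + 1) → ℝ) → V, ContDiff ℝ (⊤ : ℕ∞) p →
        ContDiff ℝ 1 (iteratedFDeriv ℝ k p) := fun p hp =>
      hp.iteratedFDeriv_right (by norm_cast; exact le_top)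
    set t : Fin k → (Fin (m + 1) → ℝ) := fun l => Pi.single (d l.succ) (1 : ℝ) with ht
    have sm2 : ∀ p : (Fin (m + 1) → ℝ) → V, ContDiff ℝ (⊤ : ℕ∞) p →
        ContDiff ℝ 1 (fun x => iteratedFDeriv ℝ k p x t) := fun p hp =>
      (ContinuousMultilinearMap.apply ℝ (fun _ : Fin k => (Fin (m + 1) → ℝ)) V t).contDiff.comp
        (sm p hp)
    have e : ∀ p : (Fin (m + 1) → ℝ) → V, ContDiff ℝ (⊤ : ℕ∞) p → ∀ x,
        (iteratedFDeriv ℝ (k + 1) p x fun l => Pi.single (d l) (1 : ℝ))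
        = fderiv ℝ (fun x => iteratedFDeriv ℝ k p x t) x (Pi.single (d 0) 1) := by
      intro p hp x
      rw [iteratedFDeriv_succ_apply_left]
      have h1 := ((ContinuousMultilinearMap.apply ℝ (fun _ : Fin k => (Fin (m + 1) → ℝ)) V
        t).hasFDerivAt.comp x ((sm p hp).differentiable (by norm_num) x).hasFDerivAt).fderiv
      have h2 := congrArg (fun M => M (Pi.single (d 0) 1)) h1
      exact h2.symm
    simp only [e f hf, e F hF]
    rw [glue_parts m _ _ g (sm2 f hf) (sm2 F hF) (hg.of_le (by norm_cast)) hc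
      (fun x hx => by rw [htr k (by omega) x hx])]
    have hg' : ContDiff ℝ (⊤ : ℕ∞) fun x => fderiv ℝ g x (Pi.single (d 0) 1) :=
      (hg.fderiv_right (m := (⊤ : ℕ∞)) (by simp)).clm_apply contDiff_const
    have := ih (fun x => fderiv ℝ g x (Pi.single (d 0) 1)) hg' (hc.fderiv_apply ℝ _)
      (fun j hj => htr j (by omega)) (fun l => d l.succ)
    rw [this]
    simp only [iter_succ k g hg]
    simp only [Fin.tail_def]
    ring

/-- gluing across a hyperplane preserves weak k-th order data: let
`A v = Σ_j B_j ∂^{α_j} v` be a homogeneous k-th order constant-coefficient operator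
(coefficients `B j : V →ₗ[ℝ] W`, direction tuples `d j : Fin k → Fin n`).  If `u`, `U`
are smooth up to the boundary on the upper/lower halfspaces, with `A u ∈ L¹(H⁺)`,
`A U ∈ L¹(H⁻)`, and the traces of `D^j u` and `D^j U` on `{xₙ = 0}` coincide for
`j = 0, …, k−1`, then the glued function `Eu` satisfies, for every test function `φ`,
`∫ Eu · A*φ = ∫_{H⁺} A u · φ + ∫_{H⁻} A U · φ`, where
`A*φ = (−1)^k Σ_j B_j^* ∂^{α_j} φ`. -/
theorem stmt_18 (m k : ℕ) (hk : 1 ≤ k)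
    (V W : Type*) [NormedAddCommGroup V] [InnerProductSpace ℝ V] [FiniteDimensional ℝ V]
    [NormedAddCommGroup W] [InnerProductSpace ℝ W] [FiniteDimensional ℝ W]
    (ι : Type*) [Fintype ι] (B : ι → V →ₗ[ℝ] W) (d : ι → Fin k → Fin (m + 1))
    (u U : (Fin (m + 1) → ℝ) → V) (hu : ContDiff ℝ (⊤ : ℕ∞) u) (hU : ContDiff ℝ (⊤ : ℕ∞) U)
    (htr : ∀ j < k, ∀ x : Fin (m + 1) → ℝ, x (Fin.last m) = 0 →
      iteratedFDeriv ℝ j u x = iteratedFDeriv ℝ j U x)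
    (Au AU : (Fin (m + 1) → ℝ) → W)
    (hAu : Au = fun x => ∑ j : ι,
      B j (iteratedFDeriv ℝ k u x fun l => Pi.single (d j l) (1 : ℝ)))
    (hAU : AU = fun x => ∑ j : ι,
      B j (iteratedFDeriv ℝ k U x fun l => Pi.single (d j l) (1 : ℝ)))
    (hint1 : IntegrableOn Au {x : Fin (m + 1) → ℝ | 0 < x (Fin.last m)})
    (hint2 : IntegrableOn AU {x : Fin (m + 1) → ℝ | x (Fin.last m) < 0})
    (E : (Fin (m + 1) → ℝ) → V)
    (hE : E = fun x => if 0 ≤ x (Fin.last m) then u x else U x)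
    (φ : (Fin (m + 1) → ℝ) → W) (hφ : ContDiff ℝ (⊤ : ℕ∞) φ) (hφc : HasCompactSupport φ) :
    ∫ x : Fin (m + 1) → ℝ,
        ⟪E x, ((-1 : ℝ) ^ k) • ∑ j : ι, (LinearMap.adjoint (B j))
          (iteratedFDeriv ℝ k φ x fun l => Pi.single (d j l) (1 : ℝ))⟫
      = (∫ x in {x : Fin (m + 1) → ℝ | 0 < x (Fin.last m)}, ⟪Au x, φ x⟫)
        + ∫ x in {x : Fin (m + 1) → ℝ | x (Fin.last m) < 0}, ⟪AU x, φ x⟫ := by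
  subst hAu hAU hE
  set S : Set (Fin (m + 1) → ℝ) := {x | 0 ≤ x (Fin.last m)} with hS
  have hms : MeasurableSet S := measurableSet_le measurable_const (measurable_pi_apply _)
  have hS1 : ({x : Fin (m + 1) → ℝ | 0 < x (Fin.last m)} : Set _) =ᵐ[volume] S := by
    have h := Measure.ae_eval_ne (fun _ : Fin (m + 1) => (volume : Measure ℝ)) (Fin.last m) 0
    rw [← volume_pi] at h
    rw [Filter.eventuallyEq_set]
    filter_upwards [h] with x hx
    simp only [hS, Set.mem_ofPred_eq]
    exact ⟨fun h => h.le, fun h => lt_of_le_of_ne h (Ne.symm hx)⟩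
  have hS2 : {x : Fin (m + 1) → ℝ | x (Fin.last m) < 0} = Sᶜ := by
    ext x; simp [hS]
  rw [setIntegral_congr_set hS1, hS2]
  have smD : ∀ (p : (Fin (m + 1) → ℝ) → V), ContDiff ℝ (⊤ : ℕ∞) p → ∀ t : Fin k → (Fin (m + 1) → ℝ),
      Continuous (fun x => iteratedFDeriv ℝ k p x t) := fun p hp t =>
    (ContinuousMultilinearMap.apply ℝ (fun _ : Fin k => (Fin (m + 1) → ℝ)) _ t).continuous.comp
      (hp.continuous_iteratedFDeriv (by norm_cast; exact le_top))
  -- the test functions `B_j^* φ`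
  let C : ι → W →L[ℝ] V := fun j => LinearMap.toContinuousLinearMap (LinearMap.adjoint (B j))
  have hC : ∀ j w, C j w = LinearMap.adjoint (B j) w := fun j w => rfl
  let g : ι → (Fin (m + 1) → ℝ) → V := fun j x => C j (φ x)
  have hg : ∀ j, ContDiff ℝ (⊤ : ℕ∞) (g j) := fun j => (C j).contDiff.comp hφ
  have hgc : ∀ j, HasCompactSupport (g j) := fun j => hφc.comp_left (g := C j) (map_zero _)
  have hgD : ∀ j x (t : Fin k → (Fin (m + 1) → ℝ)), LinearMap.adjoint (B j)
      (iteratedFDeriv ℝ k φ x t) = iteratedFDeriv ℝ k (g j) x t := by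
    intro j x t
    have := (C j).iteratedFDeriv_comp_left (hφ.contDiffAt (x := x)) (i := k)
      (by norm_cast; exact le_top)
    exact (congrArg (fun M => M t) this).symm
  have hgDc : ∀ j (t : Fin k → (Fin (m + 1) → ℝ)),
      HasCompactSupport fun x => iteratedFDeriv ℝ k (g j) x t := fun j t =>
    ((hgc j).iteratedFDeriv (𝕜 := ℝ) k).comp_left 
      (g := fun M : ContinuousMultilinearMap ℝ (fun _ : Fin k => (Fin (m + 1) → ℝ)) V => M t) rfl
  have csr : ∀ p q : (Fin (m + 1) → ℝ) → V, HasCompactSupport q →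
      HasCompactSupport fun x => ⟪p x, q x⟫ := fun p q hq =>
    hq.mono (fun x hx => by
      contrapose! hx
      simp only [Function.mem_support, not_not] at hx ⊢
      simp [hx])
  have int1 : ∀ p : (Fin (m + 1) → ℝ) → V, ContDiff ℝ (⊤ : ℕ∞) p → ∀ j
      (t : Fin k → (Fin (m + 1) → ℝ)),
      Integrable fun x => ⟪p x, iteratedFDeriv ℝ k (g j) x t⟫ := fun p hp j t =>
    (hp.continuous.inner (smD (g j) (hg j) t)).integrable_of_hasCompactSupport
      (csr _ _ (hgDc j t))
  have int2 : ∀ p : (Fin (m + 1) → ℝ) → V, ContDiff ℝ (⊤ : ℕ∞) p → ∀ j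
      (t : Fin k → (Fin (m + 1) → ℝ)),
      Integrable fun x => ⟪iteratedFDeriv ℝ k p x t, g j x⟫ := fun p hp j t =>
    ((smD p hp t).inner (hg j).continuous).integrable_of_hasCompactSupport
      (csr _ _ (hgc j))
  have eR : ∀ p : (Fin (m + 1) → ℝ) → V, ContDiff ℝ (⊤ : ℕ∞) p → ∀ T : Set (Fin (m + 1) → ℝ),
      ∫ x in T, ⟪∑ j : ι, B j (iteratedFDeriv ℝ k p x fun l => Pi.single (d j l) (1 : ℝ)), φ x⟫
      = ∑ j : ι, ∫ x in T,
        ⟪iteratedFDeriv ℝ k p x fun l => Pi.single (d j l) (1 : ℝ), g j x⟫ := by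
    intro p hp T
    rw [← integral_finsetSum _ (fun j _ => (int2 p hp j _).integrableOn)]
    congr 1
    funext x
    rw [sum_inner]
    refine Finset.sum_congr rfl fun j _ => ?_
    rw [← LinearMap.adjoint_inner_right]
    rfl
  rw [eR u hu, eR U hU, ← Finset.sum_add_distrib]
  have hmain := fun j => iter_glue m u U hu hU k (g j) (hg j) (hgc j) htr (d j)
  rw [Finset.sum_congr rfl (fun j _ => hmain j)]
  -- the left-hand side
  have eL : ∀ (p : V) (x : Fin (m + 1) → ℝ),
      ⟪p, ((-1 : ℝ) ^ k) • ∑ j : ι, (LinearMap.adjoint (B j))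
          (iteratedFDeriv ℝ k φ x fun l => Pi.single (d j l) (1 : ℝ))⟫
      = (-1 : ℝ) ^ k * ∑ j : ι,
        ⟪p, iteratedFDeriv ℝ k (g j) x fun l => Pi.single (d j l) (1 : ℝ)⟫ := by
    intro p x
    rw [inner_smul_right, inner_sum]
    simp only [hgD]
  simp only [eL]
  have iu : ∀ p : (Fin (m + 1) → ℝ) → V, ContDiff ℝ (⊤ : ℕ∞) p → Integrable fun x =>
      (-1 : ℝ) ^ k * ∑ j : ι,
        ⟪p x, iteratedFDeriv ℝ k (g j) x fun l => Pi.single (d j l) (1 : ℝ)⟫ := fun p hp =>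
    (integrable_finsetSum _ (fun j _ => int1 p hp j _)).const_mul _
  have c1 : Set.EqOn (fun x => (-1 : ℝ) ^ k * ∑ j : ι,
        ⟪if 0 ≤ x (Fin.last m) then u x else U x,
          iteratedFDeriv ℝ k (g j) x fun l => Pi.single (d j l) (1 : ℝ)⟫)
      (fun x => (-1 : ℝ) ^ k * ∑ j : ι,
        ⟪u x, iteratedFDeriv ℝ k (g j) x fun l => Pi.single (d j l) (1 : ℝ)⟫) S := by
    intro x hx
    have hx' : 0 ≤ x (Fin.last m) := hx
    simp only [if_pos hx']
  have c2 : Set.EqOn (fun x => (-1 : ℝ) ^ k * ∑ j : ι,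
        ⟪if 0 ≤ x (Fin.last m) then u x else U x,
          iteratedFDeriv ℝ k (g j) x fun l => Pi.single (d j l) (1 : ℝ)⟫)
      (fun x => (-1 : ℝ) ^ k * ∑ j : ι,
        ⟪U x, iteratedFDeriv ℝ k (g j) x fun l => Pi.single (d j l) (1 : ℝ)⟫) Sᶜ := by
    intro x hx
    have hx' : ¬ 0 ≤ x (Fin.last m) := hx
    simp only [if_neg hx']
  have i1 := (iu u hu).integrableOn.congr_fun c1.symm hms
  have i2 := (iu U hU).integrableOn.congr_fun c2.symm hms.compl
  rw [← setIntegral_univ, ← Set.union_compl_self S,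
    setIntegral_union disjoint_compl_right hms.compl i1 i2,
    setIntegral_congr_fun hms c1, setIntegral_congr_fun hms.compl c2,
    integral_const_mul, integral_const_mul,
    integral_finsetSum _ (fun j _ => (int1 u hu j _).integrableOn),
    integral_finsetSum _ (fun j _ => (int1 U hU j _).integrableOn),
    ← mul_add, ← Finset.sum_add_distrib, Finset.mul_sum]
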